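/- arXiv:1201.4296 — 6 statements merged into one kernel-verified Lean document; each statement's English description precedes it below -/
import Mathlib

section
/- Let a ∈ R \ {0} and let 𝓡 ⊆ R be a transversal for R/aR. Then the operators U^b e_a U^{-b}, for b ∈ 𝓡, are pairwise orthogonal projections on ℓ²(R) and Σ_{b ∈ 𝓡} U^b e_a U^{-b} = 1 (the identity operator). -/
open NumberField
open scoped Classical

theorem aux_ext {ι : Type*} (A B : lp (fun _ : ι => ℂ) 2 →L[ℂ] lp (fun _ : ι => ℂ) 2)
    (h : ∀ r, A (lp.single 2 r (1 : ℂ)) = B (lp.single 2 r (1 : ℂ))) : A = B := by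
  ext1 f
  have hf := lp.hasSum_single (p := 2) (by simp) f
  have hA := hf.mapL A
  have hB := hf.mapL B
  refine hA.unique ?_
  convert hB using 2 with r
  have : lp.single (E := fun _ : ι => ℂ) 2 r (f r) = f r • lp.single (E := fun _ : ι => ℂ) 2 r (1 : ℂ) := by
    rw [← lp.single_smul]; simp
  rw [this, map_smul, map_smul, h]

theorem aux_vec {ι : Type*} (f g : lp (fun _ : ι => ℂ) 2)
    (h : ∀ r, inner ℂ (lp.single (E := fun _ : ι => ℂ) 2 r (1 : ℂ)) f
      = inner ℂ (lp.single (E := fun _ : ι => ℂ) 2 r (1 : ℂ)) g) : f = g := by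
  ext r
  have := h r
  simpa [lp.inner_single_left] using this

theorem aux_inner {ι : Type*} (r s : ι) : inner ℂ (lp.single (E := fun _ : ι => ℂ) 2 r (1 : ℂ))
      (lp.single (E := fun _ : ι => ℂ) 2 s (1 : ℂ)) = if r = s then (1 : ℂ) else 0 := by
  rw [lp.inner_single_left]
  by_cases h : r = s
  · subst h; simp
  · simp [h, lp.single_apply]

/-- Let `a ∈ R \ {0}` and let `𝓡 ⊆ R` be a transversal for `R/aR` (a finite set containing
exactly one representative of each coset of the ideal `aR`).  Then the operators
`U^b e_a U^{-b}` (`b ∈ 𝓡`), where `e_a = S_a S_a*`, are pairwise orthogonal projections on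
`ℓ²(R)` whose sum is the identity operator.  Here `U` and `S` are the families of bounded
operators on `ℓ²(R)` determined on the canonical orthonormal basis by `U^b ε_r = ε_{b+r}`
and `S_a ε_r = ε_{ar}`. -/
theorem stmt1 (K : Type*) [Field K] [NumberField K]
    (U S : 𝓞 K → (lp (fun _ : 𝓞 K => ℂ) 2 →L[ℂ] lp (fun _ : 𝓞 K => ℂ) 2))
    (hU : ∀ b r : 𝓞 K, U b (lp.single 2 r (1 : ℂ)) = lp.single 2 (b + r) (1 : ℂ))
    (hS : ∀ a : 𝓞 K, a ≠ 0 → ∀ r : 𝓞 K,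
      S a (lp.single 2 r (1 : ℂ)) = lp.single 2 (a * r) (1 : ℂ))
    (a : 𝓞 K) (ha : a ≠ 0)
    (𝓡 : Finset (𝓞 K)) (h𝓡 : ∀ r : 𝓞 K, ∃! b, b ∈ 𝓡 ∧ a ∣ (r - b)) :
    (∀ b ∈ 𝓡,
      ContinuousLinearMap.adjoint
          ((U b).comp (((S a).comp (ContinuousLinearMap.adjoint (S a))).comp (U (-b)))) =
        (U b).comp (((S a).comp (ContinuousLinearMap.adjoint (S a))).comp (U (-b))) ∧
      ((U b).comp (((S a).comp (ContinuousLinearMap.adjoint (S a))).comp (U (-b)))).comp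
          ((U b).comp (((S a).comp (ContinuousLinearMap.adjoint (S a))).comp (U (-b)))) =
        (U b).comp (((S a).comp (ContinuousLinearMap.adjoint (S a))).comp (U (-b)))) ∧
    (∀ b ∈ 𝓡, ∀ b' ∈ 𝓡, b ≠ b' →
      ((U b).comp (((S a).comp (ContinuousLinearMap.adjoint (S a))).comp (U (-b)))).comp
          ((U b').comp (((S a).comp (ContinuousLinearMap.adjoint (S a))).comp (U (-b')))) = 0) ∧
    ∑ b ∈ 𝓡, (U b).comp (((S a).comp (ContinuousLinearMap.adjoint (S a))).comp (U (-b))) =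
      ContinuousLinearMap.id ℂ (lp (fun _ : 𝓞 K => ℂ) 2) := by
  have hadj : ∀ s, ContinuousLinearMap.adjoint (S a) (lp.single 2 (a * s) (1 : ℂ))
      = lp.single 2 s (1 : ℂ) := by
    intro s
    apply aux_vec
    intro r
    rw [ContinuousLinearMap.adjoint_inner_right, hS a ha, aux_inner, aux_inner]
    simp [ha]
  have hadj0 : ∀ s, ¬ a ∣ s → ContinuousLinearMap.adjoint (S a) (lp.single 2 s (1 : ℂ)) = 0 := by
    intro s hs
    apply aux_vec
    intro r
    rw [ContinuousLinearMap.adjoint_inner_right, hS a ha, aux_inner, inner_zero_right, if_neg]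
    rintro rfl
    exact hs ⟨r, rfl⟩
  set P : 𝓞 K → (lp (fun _ : 𝓞 K => ℂ) 2 →L[ℂ] lp (fun _ : 𝓞 K => ℂ) 2) := fun b =>
    (U b).comp (((S a).comp (ContinuousLinearMap.adjoint (S a))).comp (U (-b))) with hP
  have key : ∀ b r, P b (lp.single 2 r (1 : ℂ)) =
      if a ∣ r - b then lp.single 2 r (1 : ℂ) else 0 := by
    intro b r
    simp only [hP, ContinuousLinearMap.comp_apply, hU]
    rw [show -b + r = r - b by ring]
    split_ifs with h
    · obtain ⟨c, hc⟩ := h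
      rw [hc, hadj, hS a ha, ← hc, hU]
      congr 1
      ring
    · rw [hadj0 _ h, map_zero, map_zero]
  change (∀ b ∈ 𝓡, ContinuousLinearMap.adjoint (P b) = P b ∧ (P b).comp (P b) = P b) ∧
    (∀ b ∈ 𝓡, ∀ b' ∈ 𝓡, b ≠ b' → (P b).comp (P b') = 0) ∧
    ∑ b ∈ 𝓡, P b = ContinuousLinearMap.id ℂ (lp (fun _ : 𝓞 K => ℂ) 2)
  clear_value P
  refine ⟨fun b _ => ⟨?_, ?_⟩, fun b hb b' hb' hne => ?_, ?_⟩
  · apply aux_ext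
    intro s
    apply aux_vec
    intro r
    rw [ContinuousLinearMap.adjoint_inner_right, key, key]
    by_cases hrs : r = s
    · subst hrs
      split_ifs <;> simp
    · split_ifs <;> simp only [aux_inner, inner_zero_left, inner_zero_right, if_neg hrs]
  · apply aux_ext
    intro r
    rw [ContinuousLinearMap.comp_apply, key]
    split_ifs with h
    · rw [key, if_pos h]
    · rw [map_zero]
  · apply aux_ext
    intro r
    rw [ContinuousLinearMap.comp_apply, key]
    split_ifs with h
    · rw [key, if_neg]
      · simp
      · intro h2
        exact hne ((h𝓡 r).unique ⟨hb, h2⟩ ⟨hb', h⟩)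
    · simp
  · apply aux_ext
    intro r
    obtain ⟨c, ⟨hc, hd⟩, hu⟩ := h𝓡 r
    rw [_root_.sum_apply, Finset.sum_eq_single c]
    · rw [key, if_pos hd]; rfl
    · intro b hb hbc
      rw [key, if_neg]
      exact fun h => hbc (hu b ⟨hb, h⟩)
    · exact fun h => absurd hc h
end

section
/- Let a, c ∈ R \ {0} and let 𝓡 ⊆ R be a transversal for R/cR. Then e_a = Σ_{b ∈ 𝓡} U^{ab} e_{ac} U^{-ab} as operators on ℓ²(R). -/
open NumberField
open scoped Classical

theorem aux_proj {R : Type*} [CommRing R] [IsDomain R]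
    (T : lp (fun _ : R => ℂ) 2 →L[ℂ] lp (fun _ : R => ℂ) 2) (a : R) (ha : a ≠ 0)
    (hT : ∀ r : R, T (lp.single 2 r (1 : ℂ)) = lp.single 2 (a * r) (1 : ℂ)) (r : R) :
    T (ContinuousLinearMap.adjoint T (lp.single 2 r (1 : ℂ))) =
      if a ∣ r then lp.single 2 r (1 : ℂ) else 0 := by
  have key : ∀ s : R, (ContinuousLinearMap.adjoint T (lp.single 2 r (1 : ℂ))) s =
      if a * s = r then 1 else 0 := by
    intro s
    have h1 := lp.inner_single_left (𝕜 := ℂ) (G := fun _ : R => ℂ) s (1 : ℂ)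
      (ContinuousLinearMap.adjoint T (lp.single 2 r (1 : ℂ)))
    rw [ContinuousLinearMap.adjoint_inner_right, hT, lp.inner_single_left] at h1
    simp only [RCLike.inner_apply, map_one, mul_one] at h1
    rw [← h1, lp.single_apply, Pi.single_apply]
  split_ifs with h
  · obtain ⟨t, rfl⟩ := h
    have : ContinuousLinearMap.adjoint T (lp.single 2 (a * t) (1 : ℂ)) = lp.single 2 t (1 : ℂ) := by
      ext s
      rw [key, lp.single_apply, Pi.single_apply]
      simp [ha]
    rw [this, hT]
  · have : ContinuousLinearMap.adjoint T (lp.single 2 r (1 : ℂ)) = 0 := by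
      ext s
      rw [key, if_neg (fun e => h ⟨s, e.symm⟩)]
      rfl
    rw [this, map_zero]

/-- Let `a, c ∈ R \ {0}` and let `𝓡 ⊆ R` be a transversal for `R/cR` (a finite set
containing exactly one representative of each coset of the ideal `cR`).  Then
`e_a = Σ_{b ∈ 𝓡} U^{ab} e_{ac} U^{-ab}` as operators on `ℓ²(R)`, where `e_a = S_a S_a*`.
Here `U` and `S` are the families of bounded operators on `ℓ²(R)` determined on the
canonical orthonormal basis by `U^b ε_r = ε_{b+r}` and `S_a ε_r = ε_{ar}`. -/
theorem stmt3 (K : Type*) [Field K] [NumberField K]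
    (U S : 𝓞 K → (lp (fun _ : 𝓞 K => ℂ) 2 →L[ℂ] lp (fun _ : 𝓞 K => ℂ) 2))
    (hU : ∀ b r : 𝓞 K, U b (lp.single 2 r (1 : ℂ)) = lp.single 2 (b + r) (1 : ℂ))
    (hS : ∀ a : 𝓞 K, a ≠ 0 → ∀ r : 𝓞 K,
      S a (lp.single 2 r (1 : ℂ)) = lp.single 2 (a * r) (1 : ℂ))
    (a c : 𝓞 K) (ha : a ≠ 0) (hc : c ≠ 0)
    (𝓡 : Finset (𝓞 K)) (h𝓡 : ∀ r : 𝓞 K, ∃! b, b ∈ 𝓡 ∧ c ∣ (r - b)) :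
    (S a).comp (ContinuousLinearMap.adjoint (S a)) =
      ∑ b ∈ 𝓡, (U (a * b)).comp
        (((S (a * c)).comp (ContinuousLinearMap.adjoint (S (a * c)))).comp (U (-(a * b)))) := by
  have single_one : ∀ f g : lp (fun _ : 𝓞 K => ℂ) 2 →L[ℂ] lp (fun _ : 𝓞 K => ℂ) 2,
      (∀ r, f (lp.single 2 r (1 : ℂ)) = g (lp.single 2 r (1 : ℂ))) → f = g := by
    intro f g h
    refine lp.ext_continuousLinearMap (by simp) fun r => ?_
    ext
    simp [h r]
  apply single_one
  intro r
  have hac : a * c ≠ 0 := mul_ne_zero ha hc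
  simp only [ContinuousLinearMap.comp_apply, ContinuousLinearMap.sum_apply, hU]
  rw [aux_proj (S a) a ha (hS a ha)]
  have e : ∀ b ∈ 𝓡, U (a * b) (S (a * c) (ContinuousLinearMap.adjoint (S (a * c))
      (lp.single 2 (-(a * b) + r) (1 : ℂ)))) =
      if a * c ∣ -(a * b) + r then lp.single 2 r (1 : ℂ) else 0 := by
    intro b _
    rw [aux_proj (S (a * c)) (a * c) hac (hS _ hac)]
    split_ifs
    · rw [hU]; congr 1; ring
    · simp
  rw [Finset.sum_congr rfl e]
  split_ifs with h
  · obtain ⟨t, rfl⟩ := h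
    have e2 : ∀ b, (a * c ∣ -(a * b) + a * t) ↔ c ∣ t - b := by
      intro b
      rw [show -(a * b) + a * t = a * (t - b) by ring, mul_dvd_mul_iff_left ha]
    obtain ⟨b, ⟨hb, hcb⟩, hu⟩ := h𝓡 t
    rw [Finset.sum_eq_single b]
    · rw [if_pos ((e2 b).2 hcb)]
    · intro b' hb' hne
      rw [if_neg]
      exact fun hd => hne (hu b' ⟨hb', (e2 b').1 hd⟩)
    · exact fun hn => absurd hb hn
  · symm
    apply Finset.sum_eq_zero
    intro b _
    rw [if_neg]
    intro hd
    apply h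
    have := (dvd_of_mul_right_dvd hd).add (Dvd.intro b rfl : a ∣ a * b)
    simpa using this
end

section
/- For every x ∈ R and every η ∈ μ, the cyclic subgroups ⟨(x, η)⟩ and ⟨(0, η)⟩ of the semidirect product R ⋊ μ are conjugate in R ⋊ μ if and only if x ∈ (1 − η)R. -/
open NumberField

/-- The multiplicative action of the roots of unity `μ` (the torsion subgroup of `(𝓞 K)ˣ`)
on the additive group of the ring of integers, as a homomorphism into the automorphisms of
`Multiplicative (𝓞 K)`; this is the datum needed to form the semidirect product `R ⋊ μ`. -/
noncomputable def muAction (K : Type*) [Field K] [NumberField K] :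
    Units.torsion K →* MulAut (Multiplicative (𝓞 K)) where
  toFun η := AddEquiv.toMultiplicative ((DistribMulAction.toAddAut (𝓞 K)ˣ (𝓞 K)) η)
  map_one' := by ext x; simp [AddEquiv.toMultiplicative]
  map_mul' a b := by ext x; simp [AddEquiv.toMultiplicative, mul_smul]

theorem muAction_conj (K : Type*) [Field K] [NumberField K] (η : Units.torsion K)
    (g : Multiplicative (𝓞 K) ⋊[muAction K] Units.torsion K) :
    g * (⟨Multiplicative.ofAdd (0 : 𝓞 K), η⟩ :
            Multiplicative (𝓞 K) ⋊[muAction K] Units.torsion K) =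
      (⟨Multiplicative.ofAdd ((1 - ((η : (𝓞 K)ˣ) : 𝓞 K)) * Multiplicative.toAdd g.left), η⟩ :
            Multiplicative (𝓞 K) ⋊[muAction K] Units.torsion K) * g := by
  have h : ∀ (ζ : Units.torsion K) (a : Multiplicative (𝓞 K)), muAction K ζ a =
      Multiplicative.ofAdd (((ζ : (𝓞 K)ˣ) : 𝓞 K) * Multiplicative.toAdd a) := fun _ _ => rfl
  apply SemidirectProduct.ext
  · rw [SemidirectProduct.mul_left, SemidirectProduct.mul_left, h, h]
    apply Multiplicative.toAdd.injective
    simp only [toAdd_mul, toAdd_ofAdd]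
    ring
  · rw [SemidirectProduct.mul_right, SemidirectProduct.mul_right]
    exact mul_comm _ _

/-- For `x ∈ R` and `η ∈ μ`, the cyclic subgroups `⟨(x, η)⟩` and `⟨(0, η)⟩` of `R ⋊ μ` are
conjugate in `R ⋊ μ` if and only if `x ∈ (1 − η)R`. -/
theorem stmt7 (K : Type*) [Field K] [NumberField K]
    (x : 𝓞 K) (η : Units.torsion K) :
    (∃ g : Multiplicative (𝓞 K) ⋊[muAction K] Units.torsion K,
      Subgroup.zpowers (⟨Multiplicative.ofAdd x, η⟩ :
          Multiplicative (𝓞 K) ⋊[muAction K] Units.torsion K) =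
        Subgroup.map (MulAut.conj g).toMonoidHom
          (Subgroup.zpowers (⟨Multiplicative.ofAdd (0 : 𝓞 K), η⟩ :
            Multiplicative (𝓞 K) ⋊[muAction K] Units.torsion K))) ↔
      ∃ r : 𝓞 K, x = (1 - ((η : (𝓞 K)ˣ) : 𝓞 K)) * r := by
  constructor
  · rintro ⟨g, hg⟩
    have hx := Subgroup.mem_zpowers (⟨Multiplicative.ofAdd x, η⟩ :
          Multiplicative (𝓞 K) ⋊[muAction K] Units.torsion K)
    rw [hg] at hx
    obtain ⟨y, hy, hyx⟩ := hx
    obtain ⟨k, rfl⟩ := Subgroup.mem_zpowers_iff.mp hy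
    have hinr : (⟨Multiplicative.ofAdd (0 : 𝓞 K), η⟩ :
            Multiplicative (𝓞 K) ⋊[muAction K] Units.torsion K) =
        SemidirectProduct.inr η := rfl
    have hk : η ^ k = η := by
      have := congrArg SemidirectProduct.rightHom hyx
      rw [hinr, ← map_zpow] at this
      simpa [-map_zpow] using this
    rw [hinr, ← map_zpow, hk, ← hinr] at hyx
    change g * _ * g⁻¹ = _ at hyx
    rw [muAction_conj, mul_inv_cancel_right] at hyx
    exact ⟨Multiplicative.toAdd g.left,
      (congrArg (fun z => Multiplicative.toAdd (SemidirectProduct.left z)) hyx).symm⟩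
  · rintro ⟨r, rfl⟩
    refine ⟨⟨Multiplicative.ofAdd r, 1⟩, ?_⟩
    rw [MonoidHom.map_zpowers]
    congr 1
    rw [MulEquiv.toMonoidHom_eq_coe, MonoidHom.coe_coe, MulAut.conj_apply]
    rw [muAction_conj, mul_inv_cancel_right]
    rfl
end

section
/- Let i, j be positive integers with ζ^i ≠ 1 and ζ^{ij} ≠ 1, let c ∈ R be divisible by ∏_{t ∣ m, 1 ≤ t < m} (1 − ζ^t) in R, and let b, d ∈ R. If (Σ_{k=0}^{j−1} ζ^{ik})·b − (1 − ζ^{ij})·d ∈ cR, then b ∈ (1 − ζ^i)R. -/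
open NumberField

/-- Let `K` be a number field, `m` the number of roots of unity in `K`, and `ζ ∈ R` a
generator of the group of roots of unity (a primitive `m`-th root of unity in the ring of
integers `R`).  Let `i, j` be positive integers with `ζ^i ≠ 1` and `ζ^{ij} ≠ 1`, let
`c ∈ R` be divisible by `∏_{t ∣ m, 1 ≤ t < m} (1 − ζ^t)`, and let `b, d ∈ R`.  If
`(Σ_{k=0}^{j−1} ζ^{ik})·b − (1 − ζ^{ij})·d ∈ cR`, then `b ∈ (1 − ζ^i)R`. -/
theorem stmt9 (K : Type*) [Field K] [NumberField K]
    (m : ℕ) (hm : m = Nat.card (Units.torsion K))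
    (ζ : 𝓞 K) (hζ : IsPrimitiveRoot ζ m)
    (i j : ℕ) (hi : 0 < i) (hj : 0 < j) (hζi : ζ ^ i ≠ 1) (hζij : ζ ^ (i * j) ≠ 1)
    (c : 𝓞 K) (hc : (∏ t ∈ Nat.properDivisors m, (1 - ζ ^ t)) ∣ c)
    (b d : 𝓞 K)
    (h : c ∣ ((∑ k ∈ Finset.range j, ζ ^ (i * k)) * b - (1 - ζ ^ (i * j)) * d)) :
    (1 - ζ ^ i) ∣ b := by
  have hm0 : 0 < m := hm ▸ Nat.card_pos
  have hnd : ¬ m ∣ i * j := fun hd => hζij ((hζ.pow_eq_one_iff_dvd _).2 hd)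
  have hlt : Nat.gcd (i * j) m < m := by
    refine lt_of_le_of_ne (Nat.gcd_le_right _ hm0) fun he => hnd ?_
    exact he ▸ Nat.gcd_dvd_left (i * j) m
  have hmem : Nat.gcd (i * j) m ∈ Nat.properDivisors m :=
    Nat.mem_properDivisors.2 ⟨Nat.gcd_dvd_right _ _, hlt⟩
  have hgc : (1 - ζ ^ Nat.gcd (i * j) m) ∣ c :=
    (Finset.dvd_prod_of_mem (fun t => 1 - ζ ^ t) hmem).trans hc
  obtain ⟨k, hk⟩ : ∃ k, i * j * k % m = Nat.gcd (i * j) m := by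
    obtain ⟨k, hk⟩ := Nat.exists_mul_mod_eq_gcd hlt
    exact ⟨k, hk.2⟩
  have hpow : ζ ^ Nat.gcd (i * j) m = (ζ ^ (i * j)) ^ k := by
    rw [← hk, ← pow_mul, ← pow_mod_orderOf ζ (i * j * k), ← hζ.eq_orderOf]
  have hdc : (1 - ζ ^ (i * j)) ∣ c := by
    refine dvd_trans ?_ hgc
    rw [hpow]
    simpa using sub_dvd_pow_sub_pow 1 (ζ ^ (i * j)) k
  have hS : (∑ k ∈ Finset.range j, ζ ^ (i * k)) * (1 - ζ ^ i) = 1 - ζ ^ (i * j) := by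
    simp only [pow_mul]
    exact geom_sum_mul_neg _ _
  have hS0 : (∑ k ∈ Finset.range j, ζ ^ (i * k)) ≠ 0 := by
    intro h0
    rw [h0, zero_mul] at hS
    exact hζij (sub_eq_zero.1 hS.symm).symm
  have h2 := hdc.trans h
  rw [← hS, mul_assoc, ← mul_sub] at h2
  have h3 := (mul_dvd_mul_iff_left hS0).1 h2
  exact (dvd_sub_left (dvd_mul_right _ _)).1 h3
end

section
/- Let G be a finitely generated free abelian group, A a saturated subgroup of G (i.e., for all x ∈ G and all integers N > 0, Nx ∈ A implies x ∈ A), and y_1, …, y_r elements of G. Then there exist elements ȳ_1, …, ȳ_r ∈ G such that for every 1 ≤ j ≤ r, A + ⟨ȳ_1, …, ȳ_j⟩ = {x ∈ G : there exists an integer N > 0 with Nx ∈ A + ⟨y_1, …, y_j⟩}. -/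
def satur {G : Type*} [AddCommGroup G] (B : AddSubgroup G) : AddSubgroup G where
  carrier := {x | ∃ n : ℤ, 0 < n ∧ n • x ∈ B}
  zero_mem' := ⟨1, one_pos, by simp⟩
  add_mem' := by
    rintro a b ⟨n, hn, ha⟩ ⟨m, hm, hb⟩
    refine ⟨n * m, mul_pos hn hm, ?_⟩
    have h1 := B.add_mem (B.zsmul_mem ha m) (B.zsmul_mem hb n)
    rw [smul_smul, smul_smul, mul_comm m n] at h1
    rwa [smul_add]
  neg_mem' := by
    rintro a ⟨n, hn, ha⟩
    exact ⟨n, hn, by rw [smul_neg]; exact B.neg_mem ha⟩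

theorem mem_satur {G : Type*} [AddCommGroup G] (B : AddSubgroup G) (x : G) :
    x ∈ satur B ↔ ∃ n : ℤ, 0 < n ∧ n • x ∈ B := Iff.rfl

theorem le_satur {G : Type*} [AddCommGroup G] (B : AddSubgroup G) : B ≤ satur B :=
  fun x hx => ⟨1, one_pos, by simpa using hx⟩

theorem satur_mono {G : Type*} [AddCommGroup G] {B C : AddSubgroup G} (h : B ≤ C) :
    satur B ≤ satur C := fun _ ⟨n, hn, hx⟩ => ⟨n, hn, h hx⟩

theorem satur_sat {G : Type*} [AddCommGroup G] (B : AddSubgroup G) (x : G) (n : ℤ) (hn : 0 < n)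
    (h : n • x ∈ satur B) : x ∈ satur B := by
  obtain ⟨m, hm, h⟩ := h
  exact ⟨m * n, mul_pos hm hn, by rwa [← smul_smul]⟩

theorem satur_sup {G : Type*} [AddCommGroup G] (B C : AddSubgroup G) :
    satur (satur B ⊔ C) = satur (B ⊔ C) := by
  apply le_antisymm
  · rintro x ⟨n, hn, hx⟩
    refine satur_sat _ x n hn ?_
    exact (sup_le (satur_mono le_sup_left) (le_sup_right.trans (le_satur _)) :
      satur B ⊔ C ≤ satur (B ⊔ C)) hx
  · exact satur_mono (sup_le_sup_right (le_satur B) C)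

theorem exists_fun {G : Type*} [AddCommGroup G] [Module.Finite ℤ G]
    (B : AddSubgroup G) (hB : ∀ (x : G) (n : ℤ), 0 < n → n • x ∈ B → x ∈ B)
    (y : G) (hy : y ∉ B) : ∃ φ : G →+ ℤ, (∀ b ∈ B, φ b = 0) ∧ φ y ≠ 0 := by
  let B' : Submodule ℤ G := AddSubgroup.toIntSubmodule B
  have hB' : ∀ x, x ∈ B' ↔ x ∈ B := fun x => Iff.rfl
  have tf : Module.IsTorsionFree ℤ (G ⧸ B') := by
    rw [Module.isTorsionFree_iff_smul_eq_zero]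
    intro n x h
    induction x using Submodule.Quotient.induction_on with | _ x
    rw [← Submodule.Quotient.mk_smul, Submodule.Quotient.mk_eq_zero, hB'] at h
    rw [Submodule.Quotient.mk_eq_zero, hB']
    rcases lt_trichotomy n 0 with h0 | h0 | h0
    · right
      refine hB x (-n) (by omega) ?_
      rw [neg_smul]; exact B.neg_mem h
    · exact Or.inl h0
    · exact Or.inr (hB x n h0 h)
  have : Module.Free ℤ (G ⧸ B') := inferInstance
  have hy' : (B'.mkQ y) ≠ 0 := by
    simpa [hB'] using hy
  obtain ⟨f, hf⟩ : ∃ f : Module.Dual ℤ (G ⧸ B'), f (B'.mkQ y) ≠ 0 := by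
    by_contra! h
    exact hy' ((Module.forall_dual_apply_eq_zero_iff ℤ _).1 h)
  refine ⟨(f.comp B'.mkQ).toAddMonoidHom, ?_, hf⟩
  intro b hb
  have : B'.mkQ b = 0 := by simpa [hB'] using hb
  simp only [LinearMap.toAddMonoidHom_coe, LinearMap.comp_apply, this, map_zero]

theorem key {G : Type*} [AddCommGroup G] [Module.Finite ℤ G]
    (B : AddSubgroup G) (hB : ∀ (x : G) (n : ℤ), 0 < n → n • x ∈ B → x ∈ B)
    (y : G) : ∃ z : G, B ⊔ AddSubgroup.closure {z} = satur (B ⊔ AddSubgroup.closure {y}) := by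
  by_cases hy : y ∈ B
  · refine ⟨y, ?_⟩
    have : B ⊔ AddSubgroup.closure {y} = B := by simpa using hy
    rw [this]
    exact le_antisymm (le_satur B) fun x ⟨n, hn, hx⟩ => hB x n hn hx
  · obtain ⟨φ, hφ, hφy⟩ := exists_fun B hB y hy
    set S := satur (B ⊔ AddSubgroup.closure {y}) with hS
    obtain ⟨a, ha⟩ := Int.subgroup_cyclic (S.map φ)
    have haS : a ∈ S.map φ := by
      rw [ha]; exact AddSubgroup.subset_closure rfl
    obtain ⟨z, hz, rfl⟩ := haS
    refine ⟨z, le_antisymm (sup_le (le_sup_left.trans (le_satur _)) (by simpa using hz)) ?_⟩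
    intro x hx
    have hx1 : φ x ∈ S.map φ := ⟨x, hx, rfl⟩
    rw [ha, AddSubgroup.mem_closure_singleton] at hx1
    obtain ⟨k, hk⟩ := hx1
    have h0 : φ (x - k • z) = 0 := by rw [map_sub, map_zsmul, hk, sub_self]
    have hS0 : x - k • z ∈ S := S.sub_mem hx (S.zsmul_mem hz k)
    have hb0 : x - k • z ∈ B := by
      obtain ⟨n, hn, h⟩ := hS0
      refine hB _ n hn ?_
      obtain ⟨b, hb, c, hc, hbc⟩ := AddSubgroup.mem_sup.1 h
      obtain ⟨m, rfl⟩ := AddSubgroup.mem_closure_singleton.1 hc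
      have := congrArg φ hbc
      rw [map_add, map_zsmul, map_zsmul, h0, hφ b hb, smul_zero, zero_add, smul_eq_mul] at this
      have hm : m = 0 := by simpa [hφy] using this
      rw [← hbc, hm, zero_smul, add_zero]
      exact hb
    exact AddSubgroup.mem_sup.2 ⟨_, hb0, k • z,
      AddSubgroup.mem_closure_singleton.2 ⟨k, rfl⟩, by abel⟩

/-- Let `G` be a finitely generated free abelian group, `A` a saturated subgroup
(`N•x ∈ A` for some `N > 0` implies `x ∈ A`), and `y 0, …, y (r-1)` elements of `G`.
Then there exist `ȳ 0, …, ȳ (r-1)` such that for every `1 ≤ j ≤ r`, the subgroup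
`A + ⟨ȳ 0, …, ȳ (j-1)⟩` equals `{x ∈ G : N•x ∈ A + ⟨y 0, …, y (j-1)⟩ for some integer N > 0}`. -/
theorem stmt14 {G : Type*} [AddCommGroup G] [Module.Free ℤ G] [Module.Finite ℤ G]
    (A : AddSubgroup G)
    (hA : ∀ (x : G) (n : ℤ), 0 < n → n • x ∈ A → x ∈ A)
    (r : ℕ) (y : Fin r → G) :
    ∃ ybar : Fin r → G, ∀ j : ℕ, 1 ≤ j → j ≤ r →
      ((A ⊔ AddSubgroup.closure (ybar '' {i : Fin r | (i : ℕ) < j}) : AddSubgroup G) : Set G) =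
        {x : G | ∃ n : ℤ, 0 < n ∧
          n • x ∈ A ⊔ AddSubgroup.closure (y '' {i : Fin r | (i : ℕ) < j})} := by

  have hsat : ∀ i : Fin r, ∃ z : G,
      satur (A ⊔ AddSubgroup.closure (y '' {k : Fin r | (k : ℕ) < i})) ⊔ AddSubgroup.closure {z} =
      satur (satur (A ⊔ AddSubgroup.closure (y '' {k : Fin r | (k : ℕ) < i})) ⊔
        AddSubgroup.closure {y i}) := fun i => key _ (satur_sat _) _
  choose z hz using hsat
  refine ⟨z, ?_⟩
  have main : ∀ j : ℕ, j ≤ r → A ⊔ AddSubgroup.closure (z '' {i : Fin r | (i : ℕ) < j}) =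
      satur (A ⊔ AddSubgroup.closure (y '' {i : Fin r | (i : ℕ) < j})) := by
    intro j
    induction j with
    | zero =>
      intro _
      simp only [Nat.not_lt_zero, Set.ofPred_false, Set.image_empty, AddSubgroup.closure_empty,
        sup_bot_eq]
      exact le_antisymm (le_satur A) fun x ⟨n, hn, hx⟩ => hA x n hn hx
    | succ j ih =>
      intro hj
      have hset : {i : Fin r | (i : ℕ) < j + 1} =
          {i : Fin r | (i : ℕ) < j} ∪ {(⟨j, hj⟩ : Fin r)} := by
        ext i
        simp only [Set.mem_ofPred_eq, Set.mem_union, Set.mem_singleton_iff, Fin.ext_iff]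
        omega
      rw [hset, Set.image_union, Set.image_union, Set.image_singleton, Set.image_singleton,
        AddSubgroup.closure_union, AddSubgroup.closure_union, ← sup_assoc, ← sup_assoc,
        ih (by omega), ← satur_sup (_ ⊔ _) (AddSubgroup.closure {y _})]
      exact hz ⟨j, hj⟩
  intro j _ hj
  rw [main j hj]
  rfl
end

section
/- Let K be a number field and μ the group of roots of unity in K, i.e., the torsion subgroup of the multiplicative group K^×. Then there exists a subgroup Γ of K^× which is free abelian (Γ, written additively, is a free ℤ-module) such that μ ∩ Γ = {1} and every element of K^× can be written as a product of an element of μ and an element of Γ; equivalently, the multiplication map μ × Γ → K^×, (ω, γ) ↦ ωγ, is a group isomorphism. -/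
theorem aux_free {ι : Type*} (N : Submodule ℤ (ι →₀ ℤ)) : Module.Free ℤ N := by
  classical
  obtain ⟨r, hr⟩ := exists_wellFoundedLT ι
  have key : ∀ i : ι, ∃ b : ι →₀ ℤ, b ∈ N ∧ (∀ j, i < j → b j = 0) ∧
      ∀ x ∈ N, (∀ j, i < j → x j = 0) → ∃ c : ℤ, x i = c * b i := by
    intro i
    let I : Ideal ℤ :=
      { carrier := {a | ∃ x ∈ N, (∀ j, i < j → x j = 0) ∧ x i = a}
        add_mem' := by
          rintro a b ⟨x, hx, hx1, rfl⟩ ⟨y, hy, hy1, rfl⟩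
          exact ⟨x + y, N.add_mem hx hy, fun j hj => by simp [hx1 j hj, hy1 j hj], by simp⟩
        zero_mem' := ⟨0, N.zero_mem, fun _ _ => rfl, rfl⟩
        smul_mem' := by
          rintro c a ⟨x, hx, hx1, rfl⟩
          exact ⟨c • x, N.smul_mem c hx, fun j hj => by simp [hx1 j hj], by simp⟩ }
    obtain ⟨a, ha⟩ := (IsPrincipalIdealRing.principal I).principal
    have haI : a ∈ I := by rw [ha]; exact Submodule.mem_span_singleton_self a
    obtain ⟨b, hb, hb1, rfl⟩ := haI
    refine ⟨b, hb, hb1, fun x hx hx1 => ?_⟩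
    have : x i ∈ I := ⟨x, hx, hx1, rfl⟩
    rw [ha, Submodule.mem_span_singleton] at this
    obtain ⟨c, hc⟩ := this
    exact ⟨c, by rw [← hc]; rfl⟩
  choose b hbN hb0 hbd using key
  let v : {i : ι // b i i ≠ 0} → N := fun i => ⟨b i, hbN i⟩
  have hli : LinearIndependent ℤ v := by
    rw [linearIndependent_iff]
    intro l hl
    by_contra hne
    have hs : l.support.Nonempty := Finsupp.support_nonempty_iff.2 hne
    let m := l.support.max' hs
    have hm : m ∈ l.support := l.support.max'_mem hs
    have h1 : (((Finsupp.linearCombination ℤ v l : N) : ι →₀ ℤ)) m.1 = 0 := by rw [hl]; rfl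
    rw [Finsupp.linearCombination_apply, Finsupp.sum, Submodule.coe_sum, Finsupp.finsetSum_apply,
      Finset.sum_eq_single m] at h1
    · have : l m * b m.1 m.1 = 0 := by simpa [v] using h1
      rcases mul_eq_zero.1 this with h | h
      · exact (Finsupp.mem_support_iff.1 hm) h
      · exact m.2 h
    · intro j hj hjm
      have : j < m := lt_of_le_of_ne (l.support.le_max' j hj) hjm
      have h2 := hb0 j.1 m.1 this
      simp [v, h2]
    · intro h; exact absurd hm h
  have hind : ∀ i : ι, ∀ x : N, (∀ j, i < j → x.1 j = 0) →
      x ∈ Submodule.span ℤ (Set.range v) := by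
    intro i
    induction i using WellFoundedLT.induction with
    | ind i ih =>
    intro x hx
    have fin : ∀ y : N, (∀ j, i ≤ j → y.1 j = 0) → y ∈ Submodule.span ℤ (Set.range v) := by
      intro y hy
      by_cases h0 : y.1 = 0
      · have : y = 0 := Subtype.ext h0
        rw [this]; exact Submodule.zero_mem _
      have hs : y.1.support.Nonempty := Finsupp.support_nonempty_iff.2 h0
      have hm := y.1.support.max'_mem hs
      refine ih (y.1.support.max' hs) ?_ y ?_
      · by_contra hlt
        exact (Finsupp.mem_support_iff.1 hm) (hy _ (not_lt.1 hlt))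
      · intro j hj
        by_contra hne
        exact absurd (y.1.support.le_max' j (Finsupp.mem_support_iff.2 hne)) (not_le.2 hj)
    obtain ⟨c, hc⟩ := hbd i x.1 x.2 hx
    by_cases hbi : b i i = 0
    · refine fin x fun j hj => ?_
      rcases hj.eq_or_lt with rfl | h
      · rw [hc, hbi, mul_zero]
      · exact hx j h
    · have h1 : x - c • v ⟨i, hbi⟩ ∈ Submodule.span ℤ (Set.range v) := by
        refine fin _ fun j hj => ?_
        rcases hj.eq_or_lt with rfl | h
        · simp [v, hc]
        · simp [v, hx j h, hb0 i j h]
      have h2 : c • v ⟨i, hbi⟩ ∈ Submodule.span ℤ (Set.range v) :=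
        Submodule.smul_mem _ _ (Submodule.subset_span ⟨_, rfl⟩)
      simpa using Submodule.add_mem _ h1 h2
  refine Module.Free.of_basis (Module.Basis.mk hli ?_)
  rintro x -
  by_cases h0 : x.1 = 0
  · have : x = 0 := Subtype.ext h0
    rw [this]; exact Submodule.zero_mem _
  have hs : x.1.support.Nonempty := Finsupp.support_nonempty_iff.2 h0
  refine hind (x.1.support.max' hs) x fun j hj => ?_
  by_contra hne
  exact absurd (x.1.support.le_max' j (Finsupp.mem_support_iff.2 hne)) (not_le.2 hj)

open NumberField FractionalIdeal IsDedekindDomain nonZeroDivisors in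
theorem aux_hom (K : Type*) [Field K] [NumberField K] :
    ∃ φ : Additive Kˣ →+ (HeightOneSpectrum (𝓞 K) →₀ ℤ),
      ∀ x : Kˣ, φ (Additive.ofMul x) = 0 ↔
        ∃ u : (𝓞 K)ˣ, Units.map (algebraMap (𝓞 K) K : 𝓞 K →* K) u = x := by
  classical
  have hne : ∀ x : Kˣ, spanSingleton (𝓞 K)⁰ (x : K) ≠ 0 := fun x => by
    simp [spanSingleton_eq_zero_iff]
  refine ⟨AddMonoidHom.mk' (fun x => Finsupp.ofSupportFinite
    (fun v => count K v (spanSingleton (𝓞 K)⁰ ((x.toMul : Kˣ) : K))) ?_) ?_, ?_⟩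
  · exact Filter.eventually_cofinite.1 (finite_factors (spanSingleton (𝓞 K)⁰ ((x.toMul : Kˣ) : K)))
  · intro x y
    ext v
    change count K v (spanSingleton (𝓞 K)⁰ (((x + y).toMul : Kˣ) : K)) =
      count K v (spanSingleton (𝓞 K)⁰ ((x.toMul : Kˣ) : K)) +
      count K v (spanSingleton (𝓞 K)⁰ ((y.toMul : Kˣ) : K))
    rw [← count_mul K v (hne _) (hne _), spanSingleton_mul_spanSingleton]
    rfl
  · intro x
    constructor
    · intro h
      have h1 : ∀ v, count K v (spanSingleton (𝓞 K)⁰ (x : K)) = 0 := fun v =>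
        DFunLike.congr_fun h v
      have h2 := finprod_heightOneSpectrum_factorization' K (hne x)
      simp only [h1, zpow_zero, finprod_one] at h2
      have h3 : (x : K) ∈ (1 : FractionalIdeal (𝓞 K)⁰ K) := by
        rw [h2]; exact mem_spanSingleton_self _ _
      have h4 : ((x⁻¹ : Kˣ) : K) ∈ (1 : FractionalIdeal (𝓞 K)⁰ K) := by
        have : spanSingleton (𝓞 K)⁰ ((x⁻¹ : Kˣ) : K) = 1 := by
          rw [← one_mul (spanSingleton (𝓞 K)⁰ ((x⁻¹ : Kˣ) : K)), h2,
            spanSingleton_mul_spanSingleton]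
          simp [← h2]
        rw [← this]; exact mem_spanSingleton_self _ _
      obtain ⟨a, ha⟩ := (mem_one_iff _).1 h3
      obtain ⟨b, hb⟩ := (mem_one_iff _).1 h4
      have hab : a * b = 1 := by
        apply FaithfulSMul.algebraMap_injective (𝓞 K) K
        rw [map_mul, ha, hb, map_one]; simp
      exact ⟨⟨a, b, hab, by rw [mul_comm, hab]⟩, Units.ext ha⟩
    · rintro ⟨u, rfl⟩
      ext v
      change count K v (spanSingleton (𝓞 K)⁰ (algebraMap (𝓞 K) K u)) = 0
      rw [← coeIdeal_span_singleton, Ideal.span_singleton_eq_top.2 u.isUnit]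
      simp [count_one]

open NumberField in
/-- Let `K` be a number field and `μ` the group of roots of unity in `K`, i.e. the torsion
subgroup of `Kˣ`.  Then there is a free abelian subgroup `Γ` of `Kˣ` with `μ ∩ Γ = {1}`
such that every element of `Kˣ` is a product of an element of `μ` and an element of `Γ`;
equivalently `Kˣ = μ × Γ`. -/
theorem stmt17 (K : Type*) [Field K] [NumberField K] :
    ∃ Γ : Subgroup Kˣ, Module.Free ℤ (Additive Γ) ∧
      CommGroup.torsion Kˣ ⊓ Γ = ⊥ ∧
      ∀ x : Kˣ, ∃ ω ∈ CommGroup.torsion Kˣ, ∃ γ ∈ Γ, x = ω * γ := by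
  obtain ⟨φ, hφ⟩ := aux_hom K
  let φ' := φ.toIntLinearMap
  have : Module.Free ℤ (LinearMap.range φ') := aux_free _
  obtain ⟨s, hs⟩ := Module.projective_lifting_property φ'.rangeRestrict LinearMap.id
    φ'.surjective_rangeRestrict
  let ι : Additive (𝓞 K)ˣ →ₗ[ℤ] Additive Kˣ :=
    (MonoidHom.toAdditive (Units.map (algebraMap (𝓞 K) K : 𝓞 K →* K))).toIntLinearMap
  have hι : Function.Injective ι :=
    Units.map_injective (FaithfulSMul.algebraMap_injective (𝓞 K) K)
  let L : Additive (𝓞 K)ˣ →ₗ[ℤ] Units.dirichletUnitTheorem.logSpace K :=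
    (Units.logEmbedding K).toIntLinearMap
  have hmem : ∀ u, L u ∈ Units.unitLattice K := fun u => Submodule.mem_map_of_mem trivial
  let q : Additive (𝓞 K)ˣ →ₗ[ℤ] Units.unitLattice K := L.codRestrict _ hmem
  have hq : Function.Surjective q := by
    rintro ⟨y, x, -, rfl⟩
    exact ⟨x, rfl⟩
  have : Module.Free ℤ (Units.unitLattice K) := Module.Free.of_basis (Units.basisUnitLattice K)
  obtain ⟨t, ht⟩ := Module.projective_lifting_property q LinearMap.id hq
  have hs' : ∀ r, φ' (s r) = r := fun r => congrArg Subtype.val (LinearMap.congr_fun hs r)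
  have ht' : ∀ r, q (t r) = r := fun r => LinearMap.congr_fun ht r
  have hφι : ∀ u, φ' (ι u) = 0 := fun u => (hφ _).2 ⟨u.toMul, rfl⟩
  let g : (LinearMap.range φ' × Units.unitLattice K) →ₗ[ℤ] Additive Kˣ :=
    s.coprod (ι ∘ₗ t)
  have hgdef : ∀ p, g p = s p.1 + ι (t p.2) := fun p => rfl
  have hg : Function.Injective g := by
    rw [injective_iff_map_eq_zero]
    rintro ⟨r, u⟩ h
    rw [hgdef] at h
    have h1 : r = 0 := by
      have := congrArg φ' h
      rw [map_add, hs', hφι, add_zero, map_zero] at this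
      exact Subtype.ext this
    subst h1
    simp only [map_zero, zero_add] at h
    have h2 : t u = 0 := hι (h.trans (map_zero ι).symm)
    have h3 : u = 0 := by rw [← ht' u, h2, map_zero]
    rw [h3]; rfl
  let Γ : Subgroup Kˣ := AddSubgroup.toSubgroup' (LinearMap.range g).toAddSubgroup
  have hΓ : ∀ x : Kˣ, x ∈ Γ ↔ ∃ p, g p = Additive.ofMul x := fun x => Iff.rfl
  refine ⟨Γ, ?_, ?_, ?_⟩
  · let e : LinearMap.range g ≃+ Additive Γ :=
      { toFun := fun x => Additive.ofMul ⟨x.1.toMul, x.2⟩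
        invFun := fun x => ⟨Additive.ofMul x.toMul.1, x.toMul.2⟩
        left_inv := fun _ => rfl
        right_inv := fun _ => rfl
        map_add' := fun _ _ => rfl }
    exact Module.Free.of_equiv ((LinearEquiv.ofInjective g hg).trans e.toIntLinearEquiv)
  · rw [eq_bot_iff]
    rintro x ⟨hx, hx2⟩
    obtain ⟨p, hp⟩ := (hΓ x).1 hx2
    obtain ⟨n, hn, hxn⟩ := (isOfFinOrder_iff_pow_eq_one).1 hx
    have h1 : g (n • p) = 0 := by
      rw [map_nsmul, hp, ← ofMul_pow, hxn]; rfl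
    have h2 : n • p = 0 := hg (h1.trans (map_zero g).symm)
    have h3 : p = 0 := by
      have h4 : (n : ℤ) • p = 0 := by rw [natCast_zsmul]; exact h2
      exact (smul_eq_zero.1 h4).resolve_left (by exact_mod_cast hn.ne')
    rw [h3, map_zero] at hp
    exact Subgroup.mem_bot.2 hp.symm
  · intro x
    let X : Additive Kˣ := Additive.ofMul x
    let r : LinearMap.range φ' := φ'.rangeRestrict X
    have h1 : φ' (X - s r) = 0 := by
      rw [map_sub, hs']; exact sub_self _
    obtain ⟨u, hu⟩ := (hφ (X - s r).toMul).1 h1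
    let U : Additive (𝓞 K)ˣ := Additive.ofMul u
    have hU : ι U = X - s r := hu
    have h2 : q (U - t (q U)) = 0 := by rw [map_sub, ht', sub_self]
    have h3 : (U - t (q U)).toMul ∈ Units.torsion K := 
      Units.dirichletUnitTheorem.logEmbedding_eq_zero_iff.1 (congrArg Subtype.val h2)
    refine ⟨(ι (U - t (q U))).toMul, ?_, (g (r, q U)).toMul, (hΓ _).2 ⟨_, rfl⟩, ?_⟩
    · exact MonoidHom.isOfFinOrder (Units.map (algebraMap (𝓞 K) K : 𝓞 K →* K)) h3
    · have : X = ι (U - t (q U)) + g (r, q U) := by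
        rw [hgdef, map_sub, hU]; abel
      exact this
end
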